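/- Let k ∈ ℤ and r ∈ (0,1), and write L = log r. Define Φ : ℝ → M₂(ℝ) by Φ(s) = [[cos(ks/2), sin(ks/2) + (s/L)cos(ks/2)], [−sin(ks/2), cos(ks/2) − (s/L)sin(ks/2)]]. Then Φ(0) = 𝟙, Φ satisfies the matrix ODE Φ'(s) = A(s)·Φ(s) where A(s) = (1/(2L))·([[sin(ks), cos(ks)], [cos(ks), −sin(ks)]] − (kL + 1)·[[0,−1],[1,0]]), and Φ(2π) = (−1)^k·[[1, 2π/L],[0,1]]. In particular the monodromy of this linear system around the circle of radius r equals (−1)^k·[[1, 2π/log r],[0,1]]. -/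

import Mathlib

open Real Set Matrix

/-- The fundamental solution `Φ(s)` of the circle-direction parallel transport ODE for the
logarithmic model with parameter `k`, where `L = log r`. -/
noncomputable def Φ (k : ℤ) (L s : ℝ) : Matrix (Fin 2) (Fin 2) ℝ :=
  !![Real.cos (k * s / 2), Real.sin (k * s / 2) + s / L * Real.cos (k * s / 2);
     -Real.sin (k * s / 2), Real.cos (k * s / 2) - s / L * Real.sin (k * s / 2)]

/-- The coefficient matrix `A(s)` of the linear system. -/
noncomputable def Acoef (k : ℤ) (L s : ℝ) : Matrix (Fin 2) (Fin 2) ℝ :=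
  (1 / (2 * L)) •
    (!![Real.sin (k * s), Real.cos (k * s); Real.cos (k * s), -Real.sin (k * s)]
      - ((k : ℝ) * L + 1) • (!![0, -1; 1, 0] : Matrix (Fin 2) (Fin 2) ℝ))

theorem stmt6 (k : ℤ) (r : ℝ) (hr : r ∈ Ioo (0 : ℝ) 1) :
    Φ k (Real.log r) 0 = 1 ∧
    (∀ s : ℝ, ∀ i j : Fin 2,
      HasDerivAt (fun s : ℝ => Φ k (Real.log r) s i j)
        ((Acoef k (Real.log r) s * Φ k (Real.log r) s) i j) s) ∧
    Φ k (Real.log r) (2 * π)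
      = ((-1 : ℝ) ^ k) • (!![1, 2 * π / Real.log r; 0, 1] : Matrix (Fin 2) (Fin 2) ℝ) := by
  have hL : Real.log r ≠ 0 := (Real.log_neg hr.1 hr.2).ne
  generalize Real.log r = L at hL
  refine ⟨?_, ?_, ?_⟩
  · ext i j
    fin_cases i <;> fin_cases j <;> simp [Φ]
  · intro s i j
    have hlin : HasDerivAt (fun s : ℝ => (k : ℝ) * s / 2) ((k : ℝ) / 2) s := by
      simpa using ((hasDerivAt_id s).const_mul (k : ℝ)).div_const 2
    have hC := hlin.cos
    have hS := hlin.sin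
    have hd : HasDerivAt (fun s : ℝ => s / L) (1 / L) s := (hasDerivAt_id s).div_const L
    have e : (k : ℝ) * s = 2 * (k * s / 2) := by ring
    have h1 : Real.sin (k * s) = 2 * Real.sin (k * s / 2) * Real.cos (k * s / 2) := by
      rw [← Real.sin_two_mul, ← e]
    have h2 : Real.cos (k * s) = 2 * Real.cos (k * s / 2) ^ 2 - 1 := by
      rw [← Real.cos_two_mul, ← e]
    have h3 := Real.sin_sq_add_cos_sq (k * s / 2)
    fin_cases i <;> fin_cases j <;>
      simp only [Φ, Acoef, Matrix.mul_apply, Fin.sum_univ_two, Matrix.smul_apply,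
        Matrix.sub_apply, h1, h2] <;>
      simp only [Fin.zero_eta, Fin.mk_one, Matrix.of_apply, Matrix.cons_val', Matrix.cons_val_zero,
        Matrix.cons_val_one, Matrix.cons_val_fin_one, smul_eq_mul]
    · refine HasDerivAt.congr_deriv (hC) ?_
      generalize Real.sin (k * s / 2) = S at *
      generalize Real.cos (k * s / 2) = C at *
      field_simp
      ring
    · refine HasDerivAt.congr_deriv (hS.add (hd.mul hC)) ?_
      generalize Real.sin (k * s / 2) = S at *
      generalize Real.cos (k * s / 2) = C at *
      field_simp
      linear_combination (-2 * L * C) * h3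
    · refine HasDerivAt.congr_deriv (hS.neg) ?_
      generalize Real.sin (k * s / 2) = S at *
      generalize Real.cos (k * s / 2) = C at *
      field_simp
      linear_combination (-2 * C) * h3
    · refine HasDerivAt.congr_deriv (hC.sub (hd.mul hS)) ?_
      generalize Real.sin (k * s / 2) = S at *
      generalize Real.cos (k * s / 2) = C at *
      field_simp
      linear_combination (-2 * C * s) * h3
  · have e : (k : ℝ) * (2 * π) / 2 = k * π := by ring
    have hs : Real.sin (k * π) = 0 := Real.sin_int_mul_pi k
    have hc : Real.cos (k * π) = (-1) ^ k := Real.cos_int_mul_pi k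
    ext i j
    fin_cases i <;> fin_cases j <;> simp [Φ, e, hs, hc] <;> ring
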